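/- For all positive integers m and n, the orbit-counting generating function for symmetric plane partitions P contained in the box B(n,n,m) is given by: ∑_P q^{o(P)} = ∏_{η ∈ B(n,n,m)/S_2} (1 − q^{1+Ht(η)})/(1 − q^{Ht(η)}), as an identity in the formal power series ring ℚ[[q]], where each (1 − q^a)^{−1} denotes the inverse of the unit 1 − q^a. Here o(P) is the number of orbits of P under the transposition (i,j,k) ↦ (j,i,k), the product is over the orbits η of B(n,n,m) under this transposition, and Ht(η) = i + j + k − 2 for any representative (i,j,k) of η. -/

import Mathlib

open scoped Classical

/-- A plane partition: a finite set of lattice points with positive integer coordinates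
that is downward closed. -/
def IsPlanePartition (P : Finset (ℕ × ℕ × ℕ)) : Prop :=
  (∀ p ∈ P, 1 ≤ p.1 ∧ 1 ≤ p.2.1 ∧ 1 ≤ p.2.2) ∧
    ∀ p ∈ P, ∀ i j k : ℕ,
      1 ≤ i → i ≤ p.1 → 1 ≤ j → j ≤ p.2.1 → 1 ≤ k → k ≤ p.2.2 → (i, j, k) ∈ P

/-- A plane partition is symmetric if it is invariant under transposing the first two
coordinates. -/
def IsSymmetricPP (P : Finset (ℕ × ℕ × ℕ)) : Prop :=
  ∀ i j k : ℕ, (i, j, k) ∈ P ↔ (j, i, k) ∈ P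

/-- The box `B(n₁,n₂,m) = {(i,j,k) : 1 ≤ i ≤ n₁, 1 ≤ j ≤ n₂, 1 ≤ k ≤ m}` as a finset. -/
def ppBox (n₁ n₂ m : ℕ) : Finset (ℕ × ℕ × ℕ) :=
  Finset.Icc 1 n₁ ×ˢ Finset.Icc 1 n₂ ×ˢ Finset.Icc 1 m

/-- The number of orbits of `P` under the transposition `(i,j,k) ↦ (j,i,k)`, i.e. the
number of distinct sets `{(i,j,k),(j,i,k)}` with `(i,j,k) ∈ P`. -/
def orbitCount (P : Finset (ℕ × ℕ × ℕ)) : ℕ :=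
  (P.image (fun p => ({p, (p.2.1, p.1, p.2.2)} : Finset (ℕ × ℕ × ℕ)))).card

/-- A partial fraction identity, obtained by reading off a leading coefficient by Lagrange
interpolation. -/
theorem sum_prod_one_sub_mul_div_sub {K ι : Type*} [Field K] [DecidableEq ι] (s : Finset ι) (x : ι → K)
    (hx : Set.InjOn x s) (h1 : ∀ i ∈ s, 1 + x i ≠ 0) :
    ∑ i ∈ s, (1 - x i) * ∏ j ∈ s.erase i, ((1 - x i * x j) / (x j - x i)) =
      1 - ∏ i ∈ s, x i := by
  let v : Option ι → K := fun o => o.elim (-1) x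
  have hinj : Set.InjOn v (Finset.insertNone s : Finset (Option ι)) := by
    rintro (_ | a) ha (_ | b) hb hab
    · rfl
    · exact absurd (show 1 + x b = 0 by
        have : -1 = x b := hab
        rw [← this]; ring) (h1 b (by simpa using hb))
    · exact absurd (show 1 + x a = 0 by
        have : x a = -1 := hab
        rw [this]; ring) (h1 a (by simpa using ha))
    · rw [hx (by simpa using ha) (by simpa using hb) hab]
  let P : Polynomial K := ∏ j ∈ s, (1 - Polynomial.C (x j) * Polynomial.X)
  have hlin : ∀ j ∈ s, (1 - Polynomial.C (x j) * Polynomial.X : Polynomial K).natDegree ≤ 1 := by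
    intro j _
    compute_degree
  have hdeg : P.natDegree ≤ s.card := by
    refine (Polynomial.natDegree_prod_le _ _).trans ?_
    simpa using Finset.sum_le_sum hlin
  have hcard : (Finset.insertNone s).card = s.card + 1 := by simp
  have key := Lagrange.coeff_eq_sum (P := P) hinj (by
    rw [hcard]
    refine lt_of_le_of_lt Polynomial.degree_le_natDegree ?_
    exact_mod_cast Nat.lt_succ_of_le hdeg)
  have hcoeff : P.coeff s.card = (-1) ^ s.card * ∏ i ∈ s, x i := by
    have := Polynomial.coeff_prod_of_natDegree_le (s := s)
      (f := fun j => (1 - Polynomial.C (x j) * Polynomial.X : Polynomial K)) (n := 1) hlin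
    rw [mul_one] at this
    rw [this, ← Finset.prod_const, ← Finset.prod_mul_distrib]
    refine Finset.prod_congr rfl fun i _ => ?_
    simp [Polynomial.coeff_one]
  have hnone : (Finset.insertNone s).erase none = s.map Function.Embedding.some := by
    ext o; cases o <;> simp
  have hsome : ∀ i ∈ s, (Finset.insertNone s).erase (some i) =
      Finset.insertNone (s.erase i) := by
    intro i _
    ext o; cases o <;> simp
  rw [hcard, Nat.add_sub_cancel, hcoeff, Finset.sum_insertNone, hnone, Finset.prod_map] at key
  have hP : ∀ t, P.eval t = ∏ j ∈ s, (1 - x j * t) := by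
    intro t; simp [P, Polynomial.eval_prod]
  have hfirst : P.eval (v none) / ∏ j ∈ s, (v none - v (Function.Embedding.some j)) =
      (-1) ^ s.card := by
    rw [hP, ← Finset.prod_div_distrib, ← Finset.prod_const]
    refine Finset.prod_congr rfl fun i hi => ?_
    have := h1 i hi
    have h2 : v none - v (Function.Embedding.some i) = -(1 + x i) := by
      change -1 - x i = _; ring
    rw [h2, div_eq_iff (neg_ne_zero.mpr this)]
    change 1 - x i * -1 = _
    ring
  have hrest : ∀ i ∈ s, P.eval (v (some i)) /
      ∏ j ∈ (Finset.insertNone s).erase (some i), (v (some i) - v j) =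
      (-1) ^ s.card * -((1 - x i) * ∏ j ∈ s.erase i, ((1 - x i * x j) / (x j - x i))) := by
    intro i hi
    have hs : s.card = (s.erase i).card + 1 := (Finset.card_erase_add_one hi).symm
    rw [hsome i hi, Finset.prod_insertNone, hP, ← Finset.mul_prod_erase s _ hi, hs, pow_succ,
      ← Finset.prod_const]
    have h2 := h1 i hi
    have e : ∏ j ∈ s.erase i, ((1 - x i * x j) / (x j - x i)) =
        (∏ j ∈ s.erase i, (-1 : K)) * ∏ j ∈ s.erase i, ((1 - x j * x i) / (x i - x j)) := by
      rw [← Finset.prod_mul_distrib]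
      refine Finset.prod_congr rfl fun j _ => ?_
      rw [← neg_sub (x i) (x j), div_neg, mul_comm (x i)]
      ring
    rw [e, Finset.prod_div_distrib]
    have e2 : (∏ j ∈ s.erase i, (-1 : K)) * ∏ j ∈ s.erase i, (-1 : K) = 1 := by
      rw [← Finset.prod_mul_distrib]; simp
    change (1 - x i * x i) * (∏ j ∈ s.erase i, (1 - x j * x i)) /
      ((x i - -1) * ∏ j ∈ s.erase i, (x i - x j)) = _
    have h3 : x i - -1 ≠ 0 := by rwa [sub_neg_eq_add, add_comm]
    rw [mul_div_mul_comm]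
    have h4 : (1 - x i * x i) / (x i - -1) = 1 - x i := by
      rw [div_eq_iff h3]; ring
    rw [h4]
    linear_combination (-(1 - x i) * ((∏ j ∈ s.erase i, (1 - x j * x i)) /
      ∏ j ∈ s.erase i, (x i - x j))) * e2
  rw [hfirst, Finset.sum_congr rfl hrest, ← Finset.mul_sum, Finset.sum_neg_distrib] at key
  have hu : ((-1 : K) ^ s.card) ≠ 0 := pow_ne_zero _ (by simp)
  have : ∏ i ∈ s, x i =
      1 + -∑ i ∈ s, (1 - x i) * ∏ j ∈ s.erase i, ((1 - x i * x j) / (x j - x i)) :=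
    mul_left_cancel₀ hu (by rw [key]; ring)
  rw [this]; ring

/-- Splitting off the index `k` in a product over all pairs `i < j`. -/
theorem prod_prod_Ioi_succAbove {M : Type*} [CommMonoid M] {n : ℕ}
    (f : Fin (n + 1) → Fin (n + 1) → M) (k : Fin (n + 1)) :
    ∏ i, ∏ j ∈ Finset.Ioi i, f i j =
      (∏ i : Fin n, ∏ j ∈ Finset.Ioi i, f (k.succAbove i) (k.succAbove j)) *
        ∏ j : Fin n, if k.succAbove j < k then f (k.succAbove j) k else f k (k.succAbove j) := by
  have hIoi : ∀ {m : ℕ} (i : Fin m) (g : Fin m → M),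
      ∏ j ∈ Finset.Ioi i, g j = ∏ j, if i < j then g j else 1 := by
    intro m i g
    rw [← Finset.prod_filter]
    congr 1
    ext; simp
  simp only [hIoi]
  rw [Fin.prod_univ_succAbove _ k]
  simp_rw [Fin.prod_univ_succAbove _ k]
  simp only [lt_self_iff_false, if_false, one_mul, Finset.prod_mul_distrib,
    Fin.succAbove_lt_succAbove_iff]
  rw [← mul_assoc, mul_comm]
  congr 1
  rw [← Finset.prod_mul_distrib]
  refine Finset.prod_congr rfl fun j _ => ?_
  rcases lt_or_gt_of_ne (Fin.succAbove_ne k j) with h | h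
  · simp [h, h.not_gt]
  · simp [h, h.not_gt]

/-- Splitting off the `k`-th row in the product formula of a projective Vandermonde determinant. -/
theorem det_projVandermonde_succAbove {R : Type*} [CommRing R] {n : ℕ} (v w : Fin (n + 1) → R)
    (k : Fin (n + 1)) :
    (Matrix.projVandermonde v w).det =
      (-1) ^ (k : ℕ) * (Matrix.projVandermonde (fun j => v (k.succAbove j))
        (fun j => w (k.succAbove j))).det *
        ∏ j : Fin n, (v (k.succAbove j) * w k - v k * w (k.succAbove j)) := by
  have hsign : ((-1 : R)) ^ (k : ℕ) = ∏ j : Fin n, if k.succAbove j < k then (-1 : R) else 1 := by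
    rw [← Finset.prod_filter, Finset.prod_const]
    congr 1
    have : (Finset.univ.filter fun j : Fin n => k.succAbove j < k) =
        Finset.univ.filter fun j : Fin n => (j : ℕ) < k := by
      ext j
      rw [Finset.mem_filter, Finset.mem_filter, Fin.succAbove_lt_iff_castSucc_lt]
      rfl
    rw [this, Fin.card_filter_val_lt]
    exact (min_eq_right (Nat.lt_succ_iff.mp k.isLt)).symm
  rw [Matrix.det_projVandermonde, Matrix.det_projVandermonde, prod_prod_Ioi_succAbove _ k, hsign,
    mul_right_comm, mul_comm]
  congr 1
  rw [← Finset.prod_mul_distrib]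
  refine Finset.prod_congr rfl fun j _ => ?_
  split_ifs <;> ring

/-- The sum over `N > l 0 > l 1 > ⋯` of the alternants `det (x i ^ l j)`, expanded recursively
along the first column. -/
def alternantSum {K : Type*} [CommRing K] : (n : ℕ) → ℕ → (Fin n → K) → K
  | 0, _, _ => 1
  | n + 1, N, x => ∑ t ∈ Finset.range N, ∑ i : Fin (n + 1),
      (-1) ^ (i : ℕ) * x i ^ t * alternantSum n t (fun j => x (i.succAbove j))

/-- The numerator matrix of the bounded Littlewood identity. -/
def littlewoodMatrix {K : Type*} [CommRing K] {n : ℕ} (N : ℕ) (x : Fin n → K) :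
    Matrix (Fin n) (Fin n) K :=
  Matrix.of fun i j => x i ^ (j.rev : ℕ) - x i ^ (N + (j : ℕ))

/-- The denominator of the bounded Littlewood identity. -/
def littlewoodDenom {K : Type*} [CommRing K] {n : ℕ} (x : Fin n → K) : K :=
  (∏ i, (1 - x i)) * ∏ i, ∏ j ∈ Finset.Ioi i, (1 - x i * x j)

theorem littlewoodDenom_succAbove {K : Type*} [CommRing K] {n : ℕ} (x : Fin (n + 1) → K)
    (k : Fin (n + 1)) :
    littlewoodDenom x = littlewoodDenom (fun j => x (k.succAbove j)) *
      ((1 - x k) * ∏ j : Fin n, (1 - x k * x (k.succAbove j))) := by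
  rw [littlewoodDenom, littlewoodDenom, prod_prod_Ioi_succAbove _ k, Fin.prod_univ_succAbove _ k]
  have : ∀ j : Fin n, (if k.succAbove j < k then 1 - x (k.succAbove j) * x k
      else 1 - x k * x (k.succAbove j)) = 1 - x k * x (k.succAbove j) := by
    intro j
    rw [mul_comm (x (k.succAbove j)), ite_self]
  simp only [this]
  ring

/-- The Vandermonde determinant in which the variables selected by `ε` are inverted, with
denominators cleared. -/
def signedVandermonde {K : Type*} [CommRing K] {n : ℕ} (x : Fin n → K) (ε : Fin n → Bool) : K :=
  (Matrix.projVandermonde (fun i => if ε i then x i else 1) (fun i => if ε i then 1 else x i)).det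

theorem det_littlewoodMatrix {K : Type*} [CommRing K] {n : ℕ} (N : ℕ) (x : Fin n → K) :
    (littlewoodMatrix N x).det =
      ∑ ε : Fin n → Bool, (∏ i, if ε i then -x i ^ N else 1) * signedVandermonde x ε := by
  have hrow : littlewoodMatrix N x = fun i => ∑ b : Bool,
      (if b then -x i ^ N else 1) • fun j : Fin n =>
        (if b then x i else 1) ^ (j : ℕ) * (if b then 1 else x i) ^ (j.rev : ℕ) := by
    ext i j
    simp [littlewoodMatrix, pow_add]
    ring
  have h := (Matrix.detRowAlternating (n := Fin n) (R := K)).toMultilinearMap.map_sum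
    (fun i (b : Bool) => (if b then -x i ^ N else 1) • fun j : Fin n =>
        (if b then x i else 1) ^ (j : ℕ) * (if b then 1 else x i) ^ (j.rev : ℕ))
  rw [hrow]
  refine h.trans (Finset.sum_congr rfl fun ε _ => ?_)
  rw [MultilinearMap.map_smul_univ]
  rfl

theorem det_littlewoodMatrix_zero {K : Type*} [Field K] {n : ℕ} (x : Fin (n + 1) → K) :
    (littlewoodMatrix 0 x).det = 0 := by
  rw [← Matrix.exists_mulVec_eq_zero_iff]
  refine ⟨fun _ => 1, fun h => one_ne_zero (congrFun h 0), ?_⟩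
  ext i
  simp only [Matrix.mulVec, dotProduct, littlewoodMatrix, Matrix.of_apply, mul_one,
    Finset.sum_sub_distrib, zero_add, Pi.zero_apply]
  rw [sub_eq_zero]
  exact Equiv.sum_comp Fin.revPerm fun j : Fin (n + 1) => x i ^ (j : ℕ)

theorem sum_bool_succAbove {M : Type*} [AddCommMonoid M] {n : ℕ} (k : Fin (n + 1))
    (F : (Fin n → Bool) → M) :
    ∑ ε : Fin n → Bool, F ε =
      ∑ ε : Fin (n + 1) → Bool, if ε k then F fun j => ε (k.succAbove j) else 0 := by
  rw [← Equiv.sum_comp (Fin.insertNthEquiv (fun _ => Bool) k), Fintype.sum_prod_type]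
  simp

theorem signedVandermonde_mul_sub {K : Type*} [Field K] {n : ℕ} (x : Fin (n + 1) → K)
    (hx : Function.Injective x) (h1 : ∀ i, 1 + x i ≠ 0) (ε : Fin (n + 1) → Bool) :
    signedVandermonde x ε * (1 - ∏ i, if ε i then x i else 1) =
      ∑ k, if ε k then (-1) ^ (k : ℕ) * signedVandermonde (fun j => x (k.succAbove j))
        (fun j => ε (k.succAbove j)) *
          ((1 - x k) * ∏ j : Fin n, (1 - x k * x (k.succAbove j))) else 0 := by
  have key := sum_prod_one_sub_mul_div_sub (Finset.univ.filter fun i => ε i = true) x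
    hx.injOn (fun i _ => h1 i)
  rw [Finset.prod_filter] at key
  rw [← key, Finset.sum_filter, Finset.mul_sum]
  refine Finset.sum_congr rfl fun k _ => ?_
  split_ifs with hk
  · have herase : ∏ j ∈ (Finset.univ.filter fun i => ε i = true).erase k,
        ((1 - x k * x j) / (x j - x k)) =
        ∏ j : Fin n, if ε (k.succAbove j) then
          (1 - x k * x (k.succAbove j)) / (x (k.succAbove j) - x k) else 1 := by
      have : (Finset.univ.filter fun i => ε i = true).erase k =
          Finset.univ.filter fun i => i ≠ k ∧ ε i = true := by
        ext; simp
      rw [this, Finset.prod_filter, Fin.prod_univ_succAbove _ k]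
      simp [Fin.succAbove_ne]
    rw [herase, signedVandermonde, det_projVandermonde_succAbove _ _ k, ← signedVandermonde]
    have hprod : (∏ j : Fin n, ((if ε (k.succAbove j) then x (k.succAbove j) else 1) *
          (if ε k then 1 else x k) - (if ε k then x k else 1) *
          (if ε (k.succAbove j) then 1 else x (k.succAbove j)))) *
        (∏ j : Fin n, if ε (k.succAbove j) then
          (1 - x k * x (k.succAbove j)) / (x (k.succAbove j) - x k) else 1) =
        ∏ j : Fin n, (1 - x k * x (k.succAbove j)) := by
      rw [← Finset.prod_mul_distrib]
      refine Finset.prod_congr rfl fun j _ => ?_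
      have hne : x (k.succAbove j) - x k ≠ 0 :=
        sub_ne_zero.mpr (hx.ne (Fin.succAbove_ne k j))
      by_cases hj : ε (k.succAbove j) = true
      · simp only [hk, hj, if_true, mul_one]
        field_simp
      · simp [hk, hj]
    rw [← hprod]
    ring
  · simp

theorem det_littlewoodMatrix_succ {K : Type*} [Field K] {n : ℕ} (N : ℕ) (x : Fin (n + 1) → K)
    (hx : Function.Injective x) (h1 : ∀ i, 1 + x i ≠ 0) :
    (littlewoodMatrix (N + 1) x).det = (littlewoodMatrix N x).det +
      ∑ k : Fin (n + 1), (-1) ^ (k : ℕ) * x k ^ N *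
        (littlewoodMatrix N fun j => x (k.succAbove j)).det *
          ((1 - x k) * ∏ j : Fin n, (1 - x k * x (k.succAbove j))) := by
  have hterm : ∀ k : Fin (n + 1), (-1) ^ (k : ℕ) * x k ^ N *
        (littlewoodMatrix N fun j => x (k.succAbove j)).det *
          ((1 - x k) * ∏ j : Fin n, (1 - x k * x (k.succAbove j))) =
      ∑ ε : Fin (n + 1) → Bool, -(∏ i, if ε i then -x i ^ N else 1) *
        (if ε k then (-1) ^ (k : ℕ) * signedVandermonde (fun j => x (k.succAbove j))
        (fun j => ε (k.succAbove j)) *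
          ((1 - x k) * ∏ j : Fin n, (1 - x k * x (k.succAbove j))) else 0) := by
    intro k
    rw [det_littlewoodMatrix, sum_bool_succAbove k, Finset.mul_sum, Finset.sum_mul]
    refine Finset.sum_congr rfl fun ε _ => ?_
    split_ifs with hk
    · rw [Fin.prod_univ_succAbove _ k, if_pos hk]
      ring
    · simp
  simp only [hterm]
  rw [Finset.sum_comm]
  simp_rw [← Finset.mul_sum, ← signedVandermonde_mul_sub x hx h1]
  rw [det_littlewoodMatrix, det_littlewoodMatrix, ← Finset.sum_add_distrib]
  refine Finset.sum_congr rfl fun ε _ => ?_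
  have : (∏ i, if ε i then -x i ^ (N + 1) else 1) =
      (∏ i, if ε i then -x i ^ N else 1) * ∏ i, if ε i then x i else 1 := by
    rw [← Finset.prod_mul_distrib]
    refine Finset.prod_congr rfl fun i _ => ?_
    split_ifs <;> ring
  rw [this]
  ring

/-- The bounded Littlewood identity. -/
theorem alternantSum_mul_littlewoodDenom {K : Type*} [Field K] {n : ℕ} (N : ℕ) (x : Fin n → K)
    (hx : Function.Injective x) (h1 : ∀ i, 1 + x i ≠ 0) :
    alternantSum n N x * littlewoodDenom x = (littlewoodMatrix N x).det := by
  induction n generalizing N with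
  | zero => simp [alternantSum, littlewoodDenom]
  | succ n ih =>
    induction N with
    | zero => simp [alternantSum, det_littlewoodMatrix_zero]
    | succ N ihN =>
      have hsucc : alternantSum (n + 1) (N + 1) x = alternantSum (n + 1) N x +
          ∑ i : Fin (n + 1), (-1) ^ (i : ℕ) * x i ^ N *
            alternantSum n N (fun j => x (i.succAbove j)) := Finset.sum_range_succ _ _
      rw [det_littlewoodMatrix_succ N x hx h1, ← ihN, hsucc, add_mul, Finset.sum_mul]
      congr 1
      refine Finset.sum_congr rfl fun k _ => ?_
      rw [← ih N (fun j => x (k.succAbove j)) (hx.comp Fin.succAbove_right_injective) fun i => h1 _,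
        littlewoodDenom_succAbove x k]
      ring

theorem dickson_two_monic_natDegree {R : Type*} [CommRing R] [Nontrivial R] (p : R) (k : ℕ) :
    (Polynomial.dickson 2 p k).Monic ∧ (Polynomial.dickson 2 p k).natDegree = k := by
  induction k using Nat.twoStepInduction with
  | zero =>
    have : Polynomial.dickson 2 p 0 = 1 := by
      rw [Polynomial.dickson_zero]; norm_num
    rw [this]
    exact ⟨Polynomial.monic_one, Polynomial.natDegree_one⟩
  | one => simp [Polynomial.dickson_one]
  | more k ih0 ih1 =>
    rw [Polynomial.dickson_add_two]
    have hmul : (Polynomial.X * Polynomial.dickson 2 p (k + 1)).Monic := Polynomial.monic_X.mul ih1.1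
    have hdeg : (Polynomial.X * Polynomial.dickson 2 p (k + 1)).natDegree = k + 2 := by
      rw [Polynomial.monic_X.natDegree_mul ih1.1, ih1.2, Polynomial.natDegree_X]; ring
    have hlt : (Polynomial.C p * Polynomial.dickson 2 p k).degree <
        (Polynomial.X * Polynomial.dickson 2 p (k + 1)).degree := by
      rw [Polynomial.degree_eq_natDegree hmul.ne_zero, hdeg]
      refine lt_of_le_of_lt Polynomial.degree_le_natDegree ?_
      have := Polynomial.natDegree_C_mul_le p (Polynomial.dickson 2 p k)
      rw [ih0.2] at this
      exact_mod_cast (by lia)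
    refine ⟨hmul.sub_of_left hlt, ?_⟩
    rw [Polynomial.natDegree_eq_of_degree_eq (Polynomial.degree_sub_eq_left_of_degree_lt hlt), hdeg]

theorem eval_dickson_two_mul_sub {R : Type*} [CommRing R] (a b : R) (k : ℕ) :
    (Polynomial.dickson 2 (a * b) k).eval (a + b) * (a - b) = a ^ (k + 1) - b ^ (k + 1) := by
  induction k using Nat.twoStepInduction with
  | zero =>
    have : Polynomial.dickson 2 (a * b) 0 = 1 := by
      rw [Polynomial.dickson_zero]; norm_num
    simp [this]
  | one => simp [Polynomial.dickson_one]; ring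
  | more k ih0 ih1 =>
    rw [Polynomial.dickson_add_two, Polynomial.eval_sub, Polynomial.eval_mul, Polynomial.eval_mul,
      Polynomial.eval_X, Polynomial.eval_C]
    linear_combination (a + b) * ih1 - a * b * ih0

/-- A form of the Weyl denominator formula of type `C`. -/
theorem det_pow_sub_pow {R : Type*} [CommRing R] [Nontrivial R] {n : ℕ} (a b : Fin n → R) (p : R)
    (hp : ∀ j, a j * b j = p) :
    (Matrix.of fun i j : Fin n => a j ^ ((i : ℕ) + 1) - b j ^ ((i : ℕ) + 1)).det =
      (∏ j, (a j - b j)) * ∏ i, ∏ j ∈ Finset.Ioi i, (a j + b j - (a i + b i)) := by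
  have h := Matrix.det_eval_matrixOfPolynomials_eq_det_vandermonde (fun j => a j + b j)
    (fun i : Fin n => Polynomial.dickson 2 p i) (fun i => (dickson_two_monic_natDegree p i).2)
    (fun i => (dickson_two_monic_natDegree p i).1)
  rw [← Matrix.det_vandermonde, h, ← Matrix.det_mul_column, ← Matrix.det_transpose]
  congr 1
  ext i j
  simp only [Matrix.transpose_apply, Matrix.of_apply]
  rw [← eval_dickson_two_mul_sub, hp, mul_comm]

theorem det_littlewoodMatrix_pow {K : Type*} [Field K] (q : K) (n : ℕ) :
    ∃ c : K, ∀ m : ℕ, (littlewoodMatrix (m + n) fun i : Fin n => q ^ ((i : ℕ) + 1)).det =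
      c * ∏ i : Fin n, ∏ j ∈ Finset.Ici i, (1 - q ^ (m + (i : ℕ) + j + 1)) := by
  refine ⟨(∏ j : Fin n, q ^ (j.rev : ℕ)) * ∏ i : Fin n, ∏ j ∈ Finset.Ioi i,
    (q ^ (j.rev : ℕ) * (1 - q ^ ((j : ℕ) - i))), fun m => ?_⟩
  have hmat : littlewoodMatrix (m + n) (fun i : Fin n => q ^ ((i : ℕ) + 1)) =
      Matrix.of fun i j : Fin n => (q ^ (j.rev : ℕ)) ^ ((i : ℕ) + 1) -
        (q ^ (m + n + (j : ℕ))) ^ ((i : ℕ) + 1) := by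
    ext i j
    simp only [littlewoodMatrix, Matrix.of_apply, ← pow_mul]
    rw [mul_comm ((i : ℕ) + 1), mul_comm ((i : ℕ) + 1)]
  have hrev : ∀ j : Fin n, (j.rev : ℕ) + j + 1 = n := by
    intro j
    rw [Fin.val_rev]
    lia
  rw [hmat, det_pow_sub_pow _ _ (q ^ (m + 2 * n - 1))]
  · have hIci : ∀ i : Fin n, ∏ j ∈ Finset.Ici i, (1 - q ^ (m + (i : ℕ) + j + 1)) =
        (1 - q ^ (m + (i : ℕ) + i + 1)) * ∏ j ∈ Finset.Ioi i, (1 - q ^ (m + (i : ℕ) + j + 1)) := by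
      intro i
      rw [← Finset.Ioi_insert, Finset.prod_insert (by simp)]
    simp only [hIci, Finset.prod_mul_distrib]
    have h1 : ∀ j : Fin n, q ^ (j.rev : ℕ) - q ^ (m + n + (j : ℕ)) =
        q ^ (j.rev : ℕ) * (1 - q ^ (m + (j : ℕ) + j + 1)) := by
      intro j
      have : m + n + (j : ℕ) = j.rev + (m + (j : ℕ) + j + 1) := by have := hrev j; lia
      rw [this, pow_add]; ring
    have h2 : ∀ i : Fin n, ∀ j ∈ Finset.Ioi i, q ^ (j.rev : ℕ) + q ^ (m + n + (j : ℕ)) -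
        (q ^ (i.rev : ℕ) + q ^ (m + n + (i : ℕ))) =
        q ^ (j.rev : ℕ) * (1 - q ^ ((j : ℕ) - i)) * (1 - q ^ (m + (i : ℕ) + j + 1)) := by
      intro i j hij
      have hlt : (i : ℕ) < j := Fin.lt_def.mp (Finset.mem_Ioi.mp hij)
      obtain ⟨d, hd⟩ := Nat.exists_eq_add_of_lt hlt
      have e1 : (i.rev : ℕ) = j.rev + ((j : ℕ) - i) := by
        have := hrev j; have := hrev i; lia
      have e2 : m + n + (i : ℕ) = j.rev + (m + (i : ℕ) + j + 1) := by
        have := hrev j; lia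
      have e3 : m + n + (j : ℕ) = j.rev + (((j : ℕ) - i) + (m + (i : ℕ) + j + 1)) := by
        have := hrev j; lia
      rw [e1, e2, e3]
      simp only [pow_add]
      ring
    rw [Finset.prod_congr rfl fun j _ => h1 j,
      Finset.prod_congr rfl fun i _ => Finset.prod_congr rfl (h2 i)]
    simp only [Finset.prod_mul_distrib]
    ring
  · intro j
    rw [← pow_add]
    congr 1
    have := hrev j
    lia

/-- The strictly decreasing `n`-tuples of natural numbers less than `N`. -/
def decreasingTuples (n N : ℕ) : Finset (Fin n → ℕ) :=
  (Fintype.piFinset fun _ => Finset.range N).filter StrictAnti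

theorem mem_decreasingTuples {n N : ℕ} {l : Fin n → ℕ} :
    l ∈ decreasingTuples n N ↔ (∀ i, l i < N) ∧ StrictAnti l := by
  simp [decreasingTuples]

theorem sum_decreasingTuples_succ {M : Type*} [AddCommMonoid M] (n N : ℕ)
    (f : (Fin (n + 1) → ℕ) → M) :
    ∑ l ∈ decreasingTuples (n + 1) N, f l =
      ∑ t ∈ Finset.range N, ∑ l ∈ decreasingTuples n t, f (Fin.cons t l : Fin (n + 1) → ℕ) := by
  rw [Finset.sum_sigma']
  symm
  refine Finset.sum_bij' (fun p _ => (Fin.cons p.1 p.2 : Fin (n + 1) → ℕ))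
    (fun l _ => ⟨l 0, Fin.tail l⟩) ?_ ?_ ?_ ?_ ?_
  · rintro ⟨t, l⟩ h
    simp only [Finset.mem_sigma, Finset.mem_range, mem_decreasingTuples] at h
    obtain ⟨ht, hl, hanti⟩ := h
    refine mem_decreasingTuples.mpr ⟨fun i => ?_, fun i j hij => ?_⟩
    · refine Fin.cases ?_ (fun i => ?_) i
      · simpa using ht
      · simpa using (hl i).trans ht
    · obtain ⟨j, rfl⟩ := Fin.exists_succ_eq.mpr (Fin.ne_zero_of_lt hij)
      refine Fin.cases (fun _ => ?_) (fun i hij => ?_) i hij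
      · simpa using hl j
      · simpa using hanti (Fin.succ_lt_succ_iff.mp hij)
  · intro l h
    rw [mem_decreasingTuples] at h
    simp only [Finset.mem_sigma, Finset.mem_range, mem_decreasingTuples]
    exact ⟨h.1 0, fun i => h.2 (Fin.succ_pos i), fun i j hij => h.2 (Fin.succ_lt_succ_iff.mpr hij)⟩
  · rintro ⟨t, l⟩ _
    simp
  · intro l _
    simp
  · intros
    rfl

theorem sum_det_pow_eq_alternantSum {K : Type*} [CommRing K] (n N : ℕ) (x : Fin n → K) :
    ∑ l ∈ decreasingTuples n N, (Matrix.of fun i j : Fin n => x i ^ l j).det =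
      alternantSum n N x := by
  induction n generalizing N with
  | zero =>
    have : decreasingTuples 0 N = {Fin.elim0} := by
      ext l
      simp [mem_decreasingTuples, Subsingleton.elim l Fin.elim0, StrictAnti]
    simp [this, alternantSum]
  | succ n ih =>
    rw [sum_decreasingTuples_succ, alternantSum]
    refine Finset.sum_congr rfl fun t _ => ?_
    simp_rw [← ih, Finset.mul_sum]
    rw [Finset.sum_comm]
    refine Finset.sum_congr rfl fun l _ => ?_
    rw [Matrix.det_succ_column_zero]
    rfl

/-- The generating function of strict Gelfand-Tsetlin patterns with top row `l`, by the sum of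
the entries. -/
def interlaceSum {K : Type*} [CommRing K] (q : K) : (n : ℕ) → (Fin n → ℕ) → K
  | 0, _ => 1
  | n + 1, l => q ^ (∑ i, l i) * ∑ μ ∈ Fintype.piFinset
      (fun j : Fin n => Finset.Ico (l j.succ) (l j.castSucc)), interlaceSum q n μ

theorem det_pow_eq_sum_interlacing {K : Type*} [Field K] (q : K) (n : ℕ) (l : Fin (n + 1) → ℕ)
    (hl : Antitone l) :
    (Matrix.of fun i j : Fin (n + 1) => (q ^ (i : ℕ)) ^ l j).det =
      (∏ i : Fin n, (1 - q ^ ((i : ℕ) + 1))) * ∑ μ ∈ Fintype.piFinset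
        (fun j : Fin n => Finset.Ico (l j.succ) (l j.castSucc)),
          (Matrix.of fun i j : Fin n => (q ^ ((i : ℕ) + 1)) ^ μ j).det := by
  let B : Matrix (Fin (n + 1)) (Fin (n + 1)) K := Matrix.of fun i =>
    Fin.cons ((q ^ (i : ℕ)) ^ l 0)
      (fun j : Fin n => (q ^ (i : ℕ)) ^ l j.succ - (q ^ (i : ℕ)) ^ l j.castSucc)
  rw [Matrix.det_eq_of_forall_col_eq_smul_add_pred (B := B) (c := fun _ => 1)
    (fun i => by simp [B]) (fun i j => by simp [B])]
  have hB : B.det = (Matrix.of fun i j : Fin n => (q ^ ((i : ℕ) + 1)) ^ l j.succ -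
      (q ^ ((i : ℕ) + 1)) ^ l j.castSucc).det := by
    rw [Matrix.det_succ_row_zero, Fin.sum_univ_succ, Finset.sum_eq_zero]
    · simp only [B, Matrix.of_apply, Fin.cons_zero, Fin.val_zero, pow_zero, one_pow, one_mul,
        add_zero]
      congr 1
    · intro j _
      simp [B]
  have hsum := (Matrix.detRowAlternating (n := Fin n) (R := K)).toMultilinearMap.map_sum_finset
    (fun j (t : ℕ) => fun i : Fin n => (q ^ ((i : ℕ) + 1)) ^ t)
    (fun j : Fin n => Finset.Ico (l j.succ) (l j.castSucc))
  have htr : ∀ μ : Fin n → ℕ, (Matrix.of fun i j : Fin n => (q ^ ((i : ℕ) + 1)) ^ μ j).det =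
      Matrix.detRowAlternating.toMultilinearMap
        (fun j => fun i : Fin n => (q ^ ((i : ℕ) + 1)) ^ μ j) := by
    intro μ
    rw [← Matrix.det_transpose]
    rfl
  rw [hB, Finset.sum_congr rfl fun μ _ => htr μ, ← hsum]
  change _ = _ * Matrix.det (Matrix.of fun j : Fin n =>
    ∑ t ∈ Finset.Ico (l j.succ) (l j.castSucc), fun i : Fin n => (q ^ ((i : ℕ) + 1)) ^ t)
  rw [← Matrix.det_mul_row, ← Matrix.det_transpose]
  congr 1
  ext j i
  simp only [Matrix.transpose_apply, Matrix.of_apply, Finset.sum_apply]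
  have hle : l j.succ ≤ l j.castSucc := hl (Fin.castSucc_lt_succ).le
  have := Finset.sum_Ico_sub (fun t => (q ^ ((i : ℕ) + 1)) ^ t) hle
  rw [← neg_sub, ← this, Finset.mul_sum, ← Finset.sum_neg_distrib]
  refine Finset.sum_congr rfl fun t _ => ?_
  ring

theorem interlaceSum_eq_det {K : Type*} [Field K] (q : K) (hq : ∀ k : ℕ, 1 - q ^ (k + 1) ≠ 0)
    (n : ℕ) :
    ∃ c : K, c ≠ 0 ∧ ∀ l : Fin n → ℕ, Antitone l → c * interlaceSum q n l =
      (Matrix.of fun i j : Fin n => (q ^ ((i : ℕ) + 1)) ^ l j).det := by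
  induction n with
  | zero => exact ⟨1, one_ne_zero, fun l _ => by simp [interlaceSum]⟩
  | succ n ih =>
    obtain ⟨c, hc, h⟩ := ih
    refine ⟨c * ∏ i : Fin n, (1 - q ^ ((i : ℕ) + 1)),
      mul_ne_zero hc (Finset.prod_ne_zero_iff.mpr fun i _ => hq i), fun l hl => ?_⟩
    have hdet : (Matrix.of fun i j : Fin (n + 1) => (q ^ ((i : ℕ) + 1)) ^ l j).det =
        q ^ (∑ i, l i) * (Matrix.of fun i j : Fin (n + 1) => (q ^ (i : ℕ)) ^ l j).det := by
      rw [← Finset.prod_pow_eq_pow_sum, ← Matrix.det_mul_row]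
      congr 1
      ext i j
      simp only [Matrix.of_apply, ← pow_mul]
      ring
    rw [hdet, det_pow_eq_sum_interlacing q n l hl, interlaceSum]
    have : ∑ μ ∈ Fintype.piFinset (fun j : Fin n => Finset.Ico (l j.succ) (l j.castSucc)),
        (Matrix.of fun i j : Fin n => (q ^ ((i : ℕ) + 1)) ^ μ j).det =
        c * ∑ μ ∈ Fintype.piFinset (fun j : Fin n => Finset.Ico (l j.succ) (l j.castSucc)),
          interlaceSum q n μ := by
      rw [Finset.mul_sum]
      refine Finset.sum_congr rfl fun μ hμ => (h μ fun i j hij => ?_).symm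
      rcases hij.eq_or_lt with rfl | hlt
      · exact le_rfl
      · simp only [Fintype.mem_piFinset, Finset.mem_Ico] at hμ
        exact ((hμ j).2.trans_le ((hl (Fin.succ_le_castSucc_iff.mpr hlt)).trans (hμ i).1)).le
    rw [this]
    ring

/-- The generating function of strict Gelfand-Tsetlin patterns with entries less than `m + n`. -/
theorem sum_interlaceSum_eq_prod {K : Type*} [Field K] (q : K) (hq0 : q ≠ 0)
    (hq : ∀ k : ℕ, 1 - q ^ (k + 1) ≠ 0) (n : ℕ) :
    ∃ a b : K, a ≠ 0 ∧ ∀ m : ℕ, a * ∑ l ∈ decreasingTuples n (m + n), interlaceSum q n l =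
      b * ∏ i : Fin n, ∏ j ∈ Finset.Ici i, (1 - q ^ (m + (i : ℕ) + j + 1)) := by
  obtain ⟨c, hc, h⟩ := interlaceSum_eq_det q hq n
  obtain ⟨b, hb⟩ := det_littlewoodMatrix_pow q n
  have hone : ∀ k : ℕ, 1 + q ^ (k + 1) ≠ 0 := by
    intro k h0
    refine hq (2 * k + 1) ?_
    have : (1 : K) - q ^ (2 * k + 1 + 1) = (1 + q ^ (k + 1)) * (1 - q ^ (k + 1)) := by ring
    rw [this, h0, zero_mul]
  have hinj : Function.Injective fun i : Fin n => q ^ ((i : ℕ) + 1) := by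
    have key : ∀ i d : ℕ, q ^ (i + 1) ≠ q ^ (i + d + 1 + 1) := by
      intro i d he
      refine hq d (mul_left_cancel₀ (pow_ne_zero (i + 1) hq0) ?_)
      rw [mul_zero, mul_sub, mul_one, sub_eq_zero, ← pow_add, he]
      congr 1; ring
    intro i j hij
    rcases lt_trichotomy (i : ℕ) j with hlt | heq | hlt
    · obtain ⟨d, hd⟩ := Nat.exists_eq_add_of_lt hlt
      exact absurd (by simpa [hd] using hij) (key i d)
    · exact Fin.ext heq
    · obtain ⟨d, hd⟩ := Nat.exists_eq_add_of_lt hlt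
      exact absurd (by simpa [hd] using hij.symm) (key j d)
  refine ⟨c * littlewoodDenom fun i : Fin n => q ^ ((i : ℕ) + 1), b, mul_ne_zero hc ?_,
    fun m => ?_⟩
  · refine mul_ne_zero (Finset.prod_ne_zero_iff.mpr fun i _ => hq i)
      (Finset.prod_ne_zero_iff.mpr fun i _ => Finset.prod_ne_zero_iff.mpr fun j _ => ?_)
    rw [← pow_add, show (i : ℕ) + 1 + (j + 1) = (i + j + 1) + 1 by ring]
    exact hq _
  · rw [← hb, ← alternantSum_mul_littlewoodDenom _ _ hinj fun i => hone i,
      ← sum_det_pow_eq_alternantSum, mul_right_comm, Finset.mul_sum]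
    congr 1
    exact Finset.sum_congr rfl fun l hl => h l (mem_decreasingTuples.mp hl).2.antitone

/-- Strict Gelfand-Tsetlin patterns, written as triangular arrays whose main diagonal is the top
row. -/
def IsStrictPattern {n : ℕ} (g : Fin n → Fin n → ℕ) : Prop :=
  (∀ i j k, i ≤ j → j < k → g i k < g i j) ∧ (∀ i j k, i < j → j ≤ k → g j k ≤ g i k) ∧
    ∀ i j, j < i → g i j = 0

/-- The strict patterns with entries less than `N`. -/
noncomputable def strictPatterns (n N : ℕ) : Finset (Fin n → Fin n → ℕ) :=
  (Fintype.piFinset fun _ => Fintype.piFinset fun _ => Finset.range N).filter IsStrictPattern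

theorem mem_strictPatterns {n N : ℕ} {g : Fin n → Fin n → ℕ} :
    g ∈ strictPatterns n N ↔ (∀ i j, g i j < N) ∧ IsStrictPattern g := by
  simp [strictPatterns]

theorem IsStrictPattern.strictAnti_diag {n : ℕ} {g : Fin n → Fin n → ℕ} (hg : IsStrictPattern g) :
    StrictAnti fun i => g i i :=
  fun i j hij => (hg.2.1 i j j hij le_rfl).trans_lt (hg.1 i i j le_rfl hij)

/-- Removal of the main diagonal of a triangular array. -/
def removeDiag {n : ℕ} (g : Fin (n + 1) → Fin (n + 1) → ℕ) (i j : Fin n) : ℕ :=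
  if i ≤ j then g i.castSucc j.succ else 0

/-- Insertion of a new main diagonal into a triangular array. -/
def insertDiag {n : ℕ} (l : Fin (n + 1) → ℕ) (g : Fin n → Fin n → ℕ) (i j : Fin (n + 1)) : ℕ :=
  if h : i < j then g (i.castPred (Fin.ne_last_of_lt h)) (j.pred (Fin.ne_zero_of_lt h))
  else if i = j then l i else 0

theorem removeDiag_insertDiag {n : ℕ} (l : Fin (n + 1) → ℕ) {g : Fin n → Fin n → ℕ}
    (hg : ∀ i j, j < i → g i j = 0) : removeDiag (insertDiag l g) = g := by
  ext i j
  by_cases hij : i ≤ j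
  · simp [removeDiag, insertDiag, hij, Fin.castSucc_lt_succ_iff]
  · simp [removeDiag, hij, hg i j (not_le.mp hij)]

theorem insertDiag_removeDiag {n : ℕ} {g : Fin (n + 1) → Fin (n + 1) → ℕ}
    (hg : ∀ i j, j < i → g i j = 0) : insertDiag (fun i => g i i) (removeDiag g) = g := by
  ext i j
  rcases lt_trichotomy i j with h | h | h
  · have : i.castPred (Fin.ne_last_of_lt h) ≤ j.pred (Fin.ne_zero_of_lt h) :=
      Nat.le_sub_one_of_lt (Fin.lt_def.mp h)
    simp [removeDiag, insertDiag, h, this]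
  · subst h
    simp [insertDiag]
  · simp [insertDiag, h.not_gt, h.ne', hg i j h]

theorem insertDiag_self {n : ℕ} (l : Fin (n + 1) → ℕ) (g : Fin n → Fin n → ℕ) (i : Fin (n + 1)) :
    insertDiag l g i i = l i := by
  simp [insertDiag]

theorem IsStrictPattern.removeDiag {n : ℕ} {g : Fin (n + 1) → Fin (n + 1) → ℕ}
    (hg : IsStrictPattern g) : IsStrictPattern (removeDiag g) := by
  refine ⟨fun i j k hij hjk => ?_, fun i j k hij hjk => ?_, fun i j hij => ?_⟩
  · simp only [_root_.removeDiag, hij, hij.trans hjk.le, if_true]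
    exact hg.1 _ _ _ (Fin.castSucc_lt_succ_iff.mpr hij).le (Fin.succ_lt_succ_iff.mpr hjk)
  · simp only [_root_.removeDiag, hjk, hij.le.trans hjk, if_true]
    exact hg.2.1 _ _ _ (Fin.castSucc_lt_castSucc_iff.mpr hij) (Fin.castSucc_lt_succ_iff.mpr hjk).le
  · simp [_root_.removeDiag, hij.not_ge]

theorem IsStrictPattern.insertDiag {n : ℕ} {l : Fin (n + 1) → ℕ} {g : Fin n → Fin n → ℕ}
    (hg : IsStrictPattern g) (hl : ∀ j : Fin n, l j.succ ≤ g j j ∧ g j j < l j.castSucc) :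
    IsStrictPattern (insertDiag l g) := by
  refine ⟨fun i j k hij hjk => ?_, fun i j k hij hjk => ?_, fun i j hij => ?_⟩
  · have hik := hij.trans_lt hjk
    obtain ⟨k, rfl⟩ := Fin.exists_succ_eq.mpr (Fin.ne_zero_of_lt hik)
    obtain ⟨i, rfl⟩ := Fin.exists_castSucc_eq.mpr (Fin.ne_last_of_lt hik)
    have hik' : i ≤ k := Fin.castSucc_lt_succ_iff.mp hik
    rcases hij.eq_or_lt with rfl | hlt
    · rw [insertDiag_self]
      simp only [_root_.insertDiag, hik, dif_pos, Fin.castPred_castSucc, Fin.pred_succ]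
      refine lt_of_le_of_lt ?_ (hl i).2
      rcases hik'.eq_or_lt with rfl | h
      · exact le_rfl
      · exact (hg.1 i i k le_rfl h).le
    · obtain ⟨j, rfl⟩ := Fin.exists_succ_eq.mpr (Fin.ne_zero_of_lt hlt)
      simp only [_root_.insertDiag, hik, hlt, dif_pos, Fin.castPred_castSucc, Fin.pred_succ]
      exact hg.1 i j k (Fin.castSucc_lt_succ_iff.mp hlt) (Fin.succ_lt_succ_iff.mp hjk)
  · have hik := hij.trans_le hjk
    obtain ⟨k, rfl⟩ := Fin.exists_succ_eq.mpr (Fin.ne_zero_of_lt hik)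
    obtain ⟨i, rfl⟩ := Fin.exists_castSucc_eq.mpr (Fin.ne_last_of_lt hik)
    rcases hjk.eq_or_lt with rfl | hlt
    · rw [insertDiag_self]
      simp only [_root_.insertDiag, hik, dif_pos, Fin.castPred_castSucc, Fin.pred_succ]
      refine (hl k).1.trans ?_
      rcases (Fin.castSucc_lt_succ_iff.mp hik).eq_or_lt with rfl | h
      · exact le_rfl
      · exact hg.2.1 i k k h le_rfl
    · obtain ⟨j, rfl⟩ := Fin.exists_castSucc_eq.mpr (Fin.ne_last_of_lt hlt)
      simp only [_root_.insertDiag, hik, hlt, dif_pos, Fin.castPred_castSucc, Fin.pred_succ]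
      exact hg.2.1 i j k (Fin.castSucc_lt_castSucc_iff.mp hij) (Fin.castSucc_lt_succ_iff.mp hlt)
  · simp [_root_.insertDiag, hij.not_gt, hij.ne']

theorem sum_insertDiag {n : ℕ} (l : Fin (n + 1) → ℕ) {g : Fin n → Fin n → ℕ}
    (hg : ∀ i j, j < i → g i j = 0) :
    ∑ i, ∑ j, insertDiag l g i j = (∑ i, l i) + ∑ i, ∑ j, g i j := by
  have hsplit : ∀ i j, insertDiag l g i j = (if i = j then l i else 0) +
      insertDiag (fun _ => 0) g i j := by
    intro i j
    rcases lt_trichotomy i j with h | h | h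
    · simp [insertDiag, h, h.ne]
    · simp [insertDiag, h]
    · simp [insertDiag, h.not_gt, h.ne']
  simp only [hsplit, Finset.sum_add_distrib, Finset.sum_ite_eq, Finset.mem_univ, if_true]
  congr 1
  rw [Fin.sum_univ_castSucc, Finset.sum_eq_zero (s := Finset.univ)
    (f := fun j => insertDiag (fun _ => 0) g (Fin.last n) j), add_zero]
  · refine Finset.sum_congr rfl fun i _ => ?_
    rw [Fin.sum_univ_succ]
    have h0 : insertDiag (fun _ => 0) g i.castSucc 0 = 0 := by
      simp [insertDiag]
    rw [h0, zero_add]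
    refine Finset.sum_congr rfl fun j _ => ?_
    by_cases hij : i ≤ j
    · simp [insertDiag, Fin.castSucc_lt_succ_iff, hij]
    · simp [insertDiag, Fin.castSucc_lt_succ_iff, hij, hg i j (not_le.mp hij)]
  · intro j _
    simp [insertDiag, (Fin.le_last j).not_gt]

theorem sum_strictPatterns_diag_eq {K : Type*} [CommRing K] (q : K) (n N : ℕ) (l : Fin n → ℕ)
    (hl : l ∈ decreasingTuples n N) :
    ∑ g ∈ (strictPatterns n N).filter (fun g => (fun i => g i i) = l),
      q ^ (∑ i, ∑ j, g i j) = interlaceSum q n l := by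
  induction n with
  | zero =>
    have : (strictPatterns 0 N).filter (fun g => (fun i => g i i) = l) = {fun i => i.elim0} := by
      ext g
      simp only [mem_strictPatterns, IsStrictPattern, IsEmpty.forall_iff, and_self, true_and,
        Finset.mem_filter, Finset.mem_singleton]
      exact iff_of_true (Subsingleton.elim _ _) (Subsingleton.elim _ _)
    simp [this, interlaceSum]
  | succ n ih =>
    rw [mem_decreasingTuples] at hl
    set S := Fintype.piFinset (fun j : Fin n => Finset.Ico (l j.succ) (l j.castSucc)) with hS
    have hmem : ∀ μ : Fin n → ℕ, μ ∈ S ↔ ∀ j, l j.succ ≤ μ j ∧ μ j < l j.castSucc := by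
      intro μ
      simp [hS]
    have hanti : ∀ μ ∈ S, μ ∈ decreasingTuples n N := by
      intro μ hμ
      rw [hmem] at hμ
      refine mem_decreasingTuples.mpr ⟨fun i => (hμ i).2.trans (hl.1 _), fun i j hij => ?_⟩
      exact (hμ j).2.trans_le ((hl.2.antitone (Fin.succ_le_castSucc_iff.mpr hij)).trans (hμ i).1)
    rw [interlaceSum, ← hS, Finset.sum_congr rfl fun μ hμ => (ih μ (hanti μ hμ)).symm]
    have hfib : ∑ μ ∈ S, ∑ g ∈ (strictPatterns n N).filter (fun g => (fun i => g i i) = μ),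
        q ^ (∑ i, ∑ j, g i j) =
        ∑ g ∈ (strictPatterns n N).filter (fun g => (fun i => g i i) ∈ S),
          q ^ (∑ i, ∑ j, g i j) := by
      rw [← Finset.sum_fiberwise_of_maps_to (s := (strictPatterns n N).filter
        (fun g => (fun i => g i i) ∈ S)) (t := S) (g := fun g i => g i i)
        (fun g hg => (Finset.mem_filter.mp hg).2)]
      refine Finset.sum_congr rfl fun μ hμ => Finset.sum_congr ?_ fun _ _ => rfl
      ext g
      simp only [Finset.mem_filter]
      constructor
      · rintro ⟨h1, rfl⟩
        exact ⟨⟨h1, hμ⟩, rfl⟩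
      · rintro ⟨⟨h1, _⟩, h2⟩
        exact ⟨h1, h2⟩
    rw [hfib, Finset.mul_sum]
    refine Finset.sum_bij' (fun g _ => removeDiag g) (fun g _ => insertDiag l g) ?_ ?_ ?_ ?_ ?_
    · intro g hg
      rw [Finset.mem_filter, mem_strictPatterns] at hg
      obtain ⟨⟨hlt, hpat⟩, rfl⟩ := hg
      rw [Finset.mem_filter, mem_strictPatterns]
      refine ⟨⟨fun i j => ?_, hpat.removeDiag⟩, (hmem _).mpr fun j => ?_⟩
      · unfold removeDiag
        split_ifs
        · exact hlt _ _
        · exact (Nat.zero_le _).trans_lt (hlt 0 0)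
      · simp only [removeDiag, le_refl, if_true]
        exact ⟨hpat.2.1 _ _ _ Fin.castSucc_lt_succ le_rfl,
          hpat.1 _ _ _ le_rfl Fin.castSucc_lt_succ⟩
    · intro g hg
      rw [Finset.mem_filter, mem_strictPatterns, hmem] at hg
      obtain ⟨⟨hlt, hpat⟩, hg⟩ := hg
      rw [Finset.mem_filter, mem_strictPatterns]
      refine ⟨⟨fun i j => ?_, hpat.insertDiag hg⟩, funext fun i => insertDiag_self l g i⟩
      unfold insertDiag
      split_ifs
      · exact hlt _ _
      · exact hl.1 _
      · exact (Nat.zero_le _).trans_lt (hl.1 0)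
    · intro g hg
      rw [Finset.mem_filter, mem_strictPatterns] at hg
      obtain ⟨⟨_, hpat⟩, rfl⟩ := hg
      exact insertDiag_removeDiag hpat.2.2
    · intro g hg
      rw [Finset.mem_filter, mem_strictPatterns] at hg
      exact removeDiag_insertDiag l hg.1.2.2.2
    · intro g hg
      rw [Finset.mem_filter, mem_strictPatterns] at hg
      obtain ⟨⟨_, hpat⟩, rfl⟩ := hg
      rw [← pow_add, ← sum_insertDiag _ hpat.removeDiag.2.2, insertDiag_removeDiag hpat.2.2]

theorem sum_strictPatterns {K : Type*} [CommRing K] (q : K) (n N : ℕ) :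
    ∑ g ∈ strictPatterns n N, q ^ (∑ i, ∑ j, g i j) =
      ∑ l ∈ decreasingTuples n N, interlaceSum q n l := by
  rw [← Finset.sum_fiberwise_of_maps_to (t := decreasingTuples n N) (g := fun g i => g i i)]
  · exact Finset.sum_congr rfl fun l hl => sum_strictPatterns_diag_eq q n N l hl
  · intro g hg
    rw [mem_strictPatterns] at hg
    exact mem_decreasingTuples.mpr ⟨fun i => hg.1 i i, hg.2.strictAnti_diag⟩

theorem IsStrictPattern.add_sub_le {n : ℕ} {g : Fin n → Fin n → ℕ} (hg : IsStrictPattern g)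
    {i i' j j' : Fin n} (hi : i ≤ i') (hj : j ≤ j') (hij : i ≤ j) (hij' : i' ≤ j') :
    g i' j' + (j' - j : ℕ) ≤ g i j := by
  have hrow : ∀ d : ℕ, ∀ k : Fin n, (k : ℕ) = j + d → g i k + d ≤ g i j := by
    intro d
    induction d with
    | zero =>
      intro k hk
      rw [Fin.ext (hk.trans (add_zero _))]
      simp
    | succ d ih =>
      intro k hk
      have hlt : (j : ℕ) + d < n := by have := k.isLt; lia
      have h1 := ih ⟨j + d, hlt⟩ rfl
      have h2 := hg.1 i ⟨j + d, hlt⟩ k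
        (Fin.le_def.mpr ((Fin.le_def.mp hij).trans (Nat.le_add_right _ _)))
        (Fin.lt_def.mpr (by rw [hk]; exact Nat.lt_succ_self _))
      lia
  have h1 := hrow (j' - j) j' (by have := Fin.le_def.mp hj; lia)
  have h2 : g i' j' ≤ g i j' := by
    rcases hi.eq_or_lt with rfl | h
    · exact le_rfl
    · exact hg.2.1 i i' j' h hij'
  lia

/-- The number of points of `P` above the base point `(i, j)`. -/
noncomputable def columnHeight (m : ℕ) (P : Finset (ℕ × ℕ × ℕ)) (i j : ℕ) : ℕ :=
  ((Finset.Icc 1 m).filter fun k => (i, j, k) ∈ P).card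

theorem columnHeight_le (m : ℕ) (P : Finset (ℕ × ℕ × ℕ)) (i j : ℕ) : columnHeight m P i j ≤ m := by
  simpa only [columnHeight, Nat.card_Icc, Nat.add_sub_cancel] using
    Finset.card_filter_le (Finset.Icc 1 m) fun k => (i, j, k) ∈ P

theorem IsPlanePartition.columnHeight_anti {P : Finset (ℕ × ℕ × ℕ)} (hP : IsPlanePartition P)
    (m : ℕ) {i i' j j' : ℕ} (h1 : 1 ≤ i) (hi : i ≤ i') (h2 : 1 ≤ j) (hj : j ≤ j') :
    columnHeight m P i' j' ≤ columnHeight m P i j := by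
  refine Finset.card_le_card fun k hk => ?_
  rw [Finset.mem_filter, Finset.mem_Icc] at hk ⊢
  exact ⟨hk.1, hP.2 _ hk.2 _ _ _ h1 hi h2 hj hk.1.1 le_rfl⟩

theorem IsPlanePartition.mem_iff_le_columnHeight {P : Finset (ℕ × ℕ × ℕ)}
    (hP : IsPlanePartition P) {n₁ n₂ m : ℕ} (hbox : P ⊆ ppBox n₁ n₂ m) (i j k : ℕ) :
    (i, j, k) ∈ P ↔ 1 ≤ k ∧ k ≤ columnHeight m P i j := by
  constructor
  · intro h
    have hpos := hP.1 _ h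
    have hb := hbox h
    simp only [ppBox, Finset.mem_product, Finset.mem_Icc] at hb hpos
    refine ⟨hpos.2.2, ?_⟩
    have hsub : Finset.Icc 1 k ⊆ (Finset.Icc 1 m).filter fun k => (i, j, k) ∈ P := by
      intro t ht
      rw [Finset.mem_Icc] at ht
      rw [Finset.mem_filter, Finset.mem_Icc]
      exact ⟨⟨ht.1, ht.2.trans hb.2.2.2⟩,
        hP.2 _ h _ _ _ hpos.1 le_rfl hpos.2.1 le_rfl ht.1 ht.2⟩
    simpa only [columnHeight, Nat.card_Icc, Nat.add_sub_cancel] using Finset.card_le_card hsub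
  · rintro ⟨h1, h2⟩
    by_contra hk
    have hsub : ((Finset.Icc 1 m).filter fun k => (i, j, k) ∈ P) ⊆ Finset.Icc 1 (k - 1) := by
      intro t ht
      rw [Finset.mem_filter, Finset.mem_Icc] at ht
      rw [Finset.mem_Icc]
      refine ⟨ht.1.1, ?_⟩
      by_contra hlt
      have hpos := hP.1 _ ht.2
      exact hk (hP.2 _ ht.2 _ _ _ hpos.1 le_rfl hpos.2.1 le_rfl h1 (by
        change k ≤ t
        lia))
    have := Finset.card_le_card hsub
    rw [Nat.card_Icc] at this
    unfold columnHeight at h2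
    lia

@[to_additive]
theorem prod_Icc_eq_prod_fin {M : Type*} [CommMonoid M] (n : ℕ) (f : ℕ → M) :
    ∏ i ∈ Finset.Icc 1 n, f i = ∏ i : Fin n, f ((i : ℕ) + 1) := by
  rw [Fin.prod_univ_eq_prod_range (fun i => f (i + 1)) n, Finset.range_eq_Ico,
    Finset.prod_Ico_add' f 0 n 1]
  rfl

theorem orbitCount_eq_sum {n m : ℕ} {P : Finset (ℕ × ℕ × ℕ)} (hbox : P ⊆ ppBox n n m)
    (hsymm : IsSymmetricPP P) :
    orbitCount P = ∑ i : Fin n, ∑ j : Fin n,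
      if i ≤ j then columnHeight m P ((i : ℕ) + 1) ((j : ℕ) + 1) else 0 := by
  have himage : P.image (fun p => ({p, (p.2.1, p.1, p.2.2)} : Finset (ℕ × ℕ × ℕ))) =
      (P.filter fun p => p.1 ≤ p.2.1).image
        (fun p => ({p, (p.2.1, p.1, p.2.2)} : Finset (ℕ × ℕ × ℕ))) := by
    refine Finset.Subset.antisymm ?_ (Finset.image_subset_image (Finset.filter_subset _ _))
    intro s hs
    rw [Finset.mem_image] at hs ⊢
    obtain ⟨⟨i, j, k⟩, hp, rfl⟩ := hs
    rcases le_total i j with h | h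
    · exact ⟨(i, j, k), Finset.mem_filter.mpr ⟨hp, h⟩, rfl⟩
    · exact ⟨(j, i, k), Finset.mem_filter.mpr ⟨(hsymm i j k).mp hp, h⟩, Finset.pair_comm _ _⟩
  have hinj : Set.InjOn (fun p => ({p, (p.2.1, p.1, p.2.2)} : Finset (ℕ × ℕ × ℕ)))
      (P.filter fun p => p.1 ≤ p.2.1 : Finset (ℕ × ℕ × ℕ)) := by
    rintro ⟨i, j, k⟩ hp ⟨i', j', k'⟩ hp' heq
    have hij : i ≤ j := (Finset.mem_filter.mp hp).2
    have hij' : i' ≤ j' := (Finset.mem_filter.mp hp').2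
    have hmem : (i, j, k) ∈ ({(i', j', k'), (j', i', k')} : Finset (ℕ × ℕ × ℕ)) := by
      have heq' : ({(i, j, k), (j, i, k)} : Finset (ℕ × ℕ × ℕ)) =
        {(i', j', k'), (j', i', k')} := heq
      rw [← heq']
      exact Finset.mem_insert_self _ _
    simp only [Finset.mem_insert, Finset.mem_singleton, Prod.mk.injEq] at hmem
    simp only [Prod.mk.injEq]
    lia
  have hfilter : (P.filter fun p => p.1 ≤ p.2.1) =
      (ppBox n n m).filter fun p => p ∈ P ∧ p.1 ≤ p.2.1 := by
    ext p
    rw [Finset.mem_filter, Finset.mem_filter]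
    exact ⟨fun h => ⟨hbox h.1, h⟩, fun h => h.2⟩
  rw [orbitCount, himage, Finset.card_image_of_injOn hinj, hfilter, Finset.card_filter, ppBox,
    Finset.sum_product, sum_Icc_eq_sum_fin]
  refine Finset.sum_congr rfl fun i _ => ?_
  rw [Finset.sum_product, sum_Icc_eq_sum_fin]
  refine Finset.sum_congr rfl fun j _ => ?_
  by_cases hij : i ≤ j
  · have : (i : ℕ) + 1 ≤ j + 1 := Nat.succ_le_succ hij
    simp [hij, columnHeight]
  · have : ¬ (i : ℕ) + 1 ≤ j + 1 := fun h => hij (Nat.le_of_succ_le_succ h)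
    simp [hij]

/-- The strict pattern formed by the column heights of a symmetric plane partition. -/
noncomputable def toStrictPattern (n m : ℕ) (P : Finset (ℕ × ℕ × ℕ)) (i j : Fin n) : ℕ :=
  if i ≤ j then columnHeight m P ((i : ℕ) + 1) ((j : ℕ) + 1) + j.rev else 0

theorem IsPlanePartition.toStrictPattern_mem {P : Finset (ℕ × ℕ × ℕ)} (hP : IsPlanePartition P)
    (n m : ℕ) : toStrictPattern n m P ∈ strictPatterns n (m + n) := by
  rw [mem_strictPatterns]
  refine ⟨fun i j => ?_, fun i j k hij hjk => ?_, fun i j k hij hjk => ?_, fun i j hij => ?_⟩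
  · unfold toStrictPattern
    split_ifs
    · exact add_lt_add_of_le_of_lt (columnHeight_le _ _ _ _) j.rev.isLt
    · have := i.isLt
      lia
  · simp only [toStrictPattern, hij, hij.trans hjk.le, if_true]
    exact add_lt_add_of_le_of_lt (hP.columnHeight_anti m (Nat.le_add_left _ _) le_rfl
      (Nat.le_add_left _ _) (Nat.succ_le_succ hjk.le)) (Fin.rev_lt_rev.mpr hjk)
  · simp only [toStrictPattern, hjk, hij.le.trans hjk, if_true]
    exact Nat.add_le_add_right (hP.columnHeight_anti m (Nat.le_add_left _ _)
      (Nat.succ_le_succ hij.le) (Nat.le_add_left _ _) le_rfl) _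
  · simp [toStrictPattern, hij.not_ge]

theorem subset_of_toStrictPattern_eq {n m : ℕ} {P Q : Finset (ℕ × ℕ × ℕ)}
    (hPbox : P ⊆ ppBox n n m) (hP : IsPlanePartition P) (hPs : IsSymmetricPP P)
    (hQbox : Q ⊆ ppBox n n m) (hQ : IsPlanePartition Q) (hQs : IsSymmetricPP Q)
    (h : toStrictPattern n m P = toStrictPattern n m Q) : P ⊆ Q := by
  have key : ∀ i j k : ℕ, i ≤ j → (i, j, k) ∈ P → (i, j, k) ∈ Q := by
    intro i j k hij hmem
    have hb := hPbox hmem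
    simp only [ppBox, Finset.mem_product, Finset.mem_Icc] at hb
    rw [hP.mem_iff_le_columnHeight hPbox] at hmem
    rw [hQ.mem_iff_le_columnHeight hQbox]
    have hc := congrFun (congrFun h ⟨i - 1, by lia⟩) ⟨j - 1, by lia⟩
    have hle : i - 1 ≤ j - 1 := by lia
    simp only [toStrictPattern, Fin.mk_le_mk, hle, if_true, Nat.add_right_cancel_iff,
      Nat.sub_add_cancel hb.1.1, Nat.sub_add_cancel hb.2.1.1] at hc
    rwa [← hc]
  rintro ⟨i, j, k⟩ hmem
  rcases le_total i j with hij | hij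
  · exact key i j k hij hmem
  · exact (hQs i j k).mpr (key j i k hij ((hPs i j k).mp hmem))

theorem exists_toStrictPattern_eq {n m : ℕ} {g : Fin n → Fin n → ℕ}
    (hg : g ∈ strictPatterns n (m + n)) :
    ∃ P ⊆ ppBox n n m, IsPlanePartition P ∧ IsSymmetricPP P ∧ toStrictPattern n m P = g := by
  rw [mem_strictPatterns] at hg
  obtain ⟨hlt, hpat⟩ := hg
  have hrev : ∀ j : Fin n, (j.rev : ℕ) + j + 1 = n := by
    intro j
    rw [Fin.val_rev]
    lia
  set P := (ppBox n n m).filter fun p => ∀ a b : Fin n, (a : ℕ) + 1 = min p.1 p.2.1 →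
    (b : ℕ) + 1 = max p.1 p.2.1 → p.2.2 + b.rev ≤ g a b with hPdef
  have hmem : ∀ i j k : ℕ, (i, j, k) ∈ P ↔ ((1 ≤ i ∧ i ≤ n) ∧ (1 ≤ j ∧ j ≤ n) ∧ 1 ≤ k ∧ k ≤ m) ∧
      ∀ a b : Fin n, (a : ℕ) + 1 = min i j → (b : ℕ) + 1 = max i j → k + b.rev ≤ g a b := by
    intro i j k
    simp [hPdef, ppBox]
  refine ⟨P, Finset.filter_subset _ _, ⟨?_, ?_⟩, ?_, ?_⟩
  · rintro ⟨i, j, k⟩ h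
    have := ((hmem _ _ _).mp h).1
    exact ⟨this.1.1, this.2.1.1, this.2.2.1⟩
  · rintro ⟨r, s, t⟩ h i j k hi1 hi hj1 hj hk1 hk
    rw [hmem] at h ⊢
    dsimp only at hi hj hk
    obtain ⟨hb, h⟩ := h
    refine ⟨by lia, fun a b ha hb' => ?_⟩
    have h1 := h ⟨min r s - 1, by lia⟩ ⟨max r s - 1, by lia⟩ (by dsimp only; lia)
      (by dsimp only; lia)
    have h2 := hpat.add_sub_le (i := a) (i' := ⟨min r s - 1, by lia⟩) (j := b)
      (j' := ⟨max r s - 1, by lia⟩) (Fin.le_def.mpr (by dsimp only; lia))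
      (Fin.le_def.mpr (by dsimp only; lia)) (Fin.le_def.mpr (by lia))
      (Fin.le_def.mpr (by dsimp only; lia))
    have h3 := hrev b
    have h4 := hrev ⟨max r s - 1, by lia⟩
    dsimp only at h2 h4
    lia
  · intro i j k
    rw [hmem, hmem, min_comm, max_comm]
    tauto
  · funext i j
    by_cases hij : i ≤ j
    · have hn : 0 < n := i.pos
      have hle : (i : ℕ) ≤ j := hij
      have hfirst := hpat.add_sub_le (i := ⟨0, hn⟩) (i' := i) (j := ⟨0, hn⟩) (j' := j)
        (Fin.le_def.mpr (Nat.zero_le _)) (Fin.le_def.mpr (Nat.zero_le _)) le_rfl hij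
      have hlast := hpat.add_sub_le (i := i) (i' := i) (j := j) (j' := ⟨n - 1, by lia⟩)
        le_rfl (Fin.le_def.mpr (by have := j.isLt; dsimp only; lia)) hij
        (Fin.le_def.mpr (by have := i.isLt; dsimp only; lia))
      have h0 := hlt ⟨0, hn⟩ ⟨0, hn⟩
      have hr := hrev j
      dsimp only at hfirst hlast
      have hset : ((Finset.Icc 1 m).filter fun k => ((i : ℕ) + 1, (j : ℕ) + 1, k) ∈ P) =
          Finset.Icc 1 (g i j - j.rev) := by
        ext k
        rw [Finset.mem_filter, hmem, Finset.mem_Icc, Finset.mem_Icc]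
        constructor
        · rintro ⟨hk, _, h⟩
          have := h i j (by lia) (by lia)
          lia
        · rintro ⟨hk1, hk2⟩
          refine ⟨by lia, ⟨⟨by have := i.isLt; lia, by have := j.isLt; lia, by lia⟩,
            fun a b ha hb => ?_⟩⟩
          have ha' : a = i := Fin.ext (by lia)
          have hb' : b = j := Fin.ext (by lia)
          rw [ha', hb']
          lia
      rw [toStrictPattern, if_pos hij, columnHeight, hset, Nat.card_Icc]
      lia
    · rw [toStrictPattern, if_neg hij, hpat.2.2 i j (not_le.mp hij)]

/-- The generating function of strict patterns, in terms of symmetric plane partitions. -/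
theorem sum_strictPatterns_eq_sum_symmetricPP {K : Type*} [CommRing K] (q : K) (n m : ℕ) :
    ∑ g ∈ strictPatterns n (m + n), q ^ (∑ i, ∑ j, g i j) =
      q ^ (∑ i : Fin n, ∑ j : Fin n, if i ≤ j then (j.rev : ℕ) else 0) *
        ∑ P ∈ (ppBox n n m).powerset.filter (fun P => IsPlanePartition P ∧ IsSymmetricPP P),
          q ^ orbitCount P := by
  rw [Finset.mul_sum]
  symm
  refine Finset.sum_bij (fun P _ => toStrictPattern n m P) ?_ ?_ ?_ ?_
  · intro P hP
    exact (Finset.mem_filter.mp hP).2.1.toStrictPattern_mem n m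
  · intro P hP Q hQ h
    simp only [Finset.mem_filter, Finset.mem_powerset] at hP hQ
    exact Finset.Subset.antisymm
      (subset_of_toStrictPattern_eq hP.1 hP.2.1 hP.2.2 hQ.1 hQ.2.1 hQ.2.2 h)
      (subset_of_toStrictPattern_eq hQ.1 hQ.2.1 hQ.2.2 hP.1 hP.2.1 hP.2.2 h.symm)
  · intro g hg
    obtain ⟨P, h1, h2, h3, h4⟩ := exists_toStrictPattern_eq hg
    exact ⟨P, by simp [h1, h2, h3], h4⟩
  · intro P hP
    simp only [Finset.mem_filter, Finset.mem_powerset] at hP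
    rw [orbitCount_eq_sum hP.1 hP.2.2, ← pow_add]
    congr 1
    simp only [← Finset.sum_add_distrib]
    refine Finset.sum_congr rfl fun i _ => Finset.sum_congr rfl fun j _ => ?_
    unfold toStrictPattern
    split_ifs <;> ring

theorem one_sub_X_pow_succ_ne_zero (k : ℕ) : (1 - PowerSeries.X ^ (k + 1) : PowerSeries ℚ) ≠ 0 := by
  intro h
  have := congrArg PowerSeries.constantCoeff h
  simp at this

theorem prod_height_telescope (m h : ℕ) :
    (∏ k ∈ Finset.Icc 1 m, ((1 - (PowerSeries.X : PowerSeries ℚ) ^ (h + k + 1)) *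
      (1 - (PowerSeries.X : PowerSeries ℚ) ^ (h + k))⁻¹)) * (1 - PowerSeries.X ^ (h + 1)) =
      1 - PowerSeries.X ^ (m + h + 1) := by
  induction m with
  | zero => simp
  | succ m ih =>
    rw [Finset.prod_Icc_succ_top (by lia), mul_right_comm, ih]
    have hinv : (1 - (PowerSeries.X : PowerSeries ℚ) ^ (h + (m + 1))) *
        (1 - (PowerSeries.X : PowerSeries ℚ) ^ (h + (m + 1)))⁻¹ = 1 :=
      PowerSeries.mul_inv_cancel _ (by simp)
    rw [show m + h + 1 = h + (m + 1) by ring, show m + 1 + h + 1 = h + (m + 1) + 1 by ring]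
    linear_combination (1 - PowerSeries.X ^ (h + (m + 1) + 1)) * hinv

theorem prod_orbits_mul_prod (n m : ℕ) :
    (∏ p ∈ (ppBox n n m).filter (fun p => p.1 ≤ p.2.1),
      (1 - (PowerSeries.X : PowerSeries ℚ) ^ (1 + (p.1 + p.2.1 + p.2.2 - 2))) *
        (1 - (PowerSeries.X : PowerSeries ℚ) ^ (p.1 + p.2.1 + p.2.2 - 2))⁻¹) *
      ∏ i : Fin n, ∏ j ∈ Finset.Ici i,
        (1 - (PowerSeries.X : PowerSeries ℚ) ^ (0 + (i : ℕ) + j + 1)) =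
    ∏ i : Fin n, ∏ j ∈ Finset.Ici i,
      (1 - (PowerSeries.X : PowerSeries ℚ) ^ (m + (i : ℕ) + j + 1)) := by
  have hIci : ∀ (i : Fin n) (f : Fin n → PowerSeries ℚ),
      ∏ j ∈ Finset.Ici i, f j = ∏ j, if i ≤ j then f j else 1 := by
    intro i f
    rw [← Finset.prod_filter]
    congr 1
    ext; simp
  simp only [hIci]
  rw [Finset.prod_filter, ppBox, Finset.prod_product, prod_Icc_eq_prod_fin,
    ← Finset.prod_mul_distrib]
  refine Finset.prod_congr rfl fun i _ => ?_
  rw [Finset.prod_product, prod_Icc_eq_prod_fin, ← Finset.prod_mul_distrib]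
  refine Finset.prod_congr rfl fun j _ => ?_
  by_cases hij : i ≤ j
  · have hle : (i : ℕ) + 1 ≤ j + 1 := Nat.succ_le_succ hij
    simp only [hij, hle, if_true]
    rw [zero_add, add_assoc m, ← prod_height_telescope m (i + j)]
    congr 1
    refine Finset.prod_congr rfl fun k _ => ?_
    rw [show (i : ℕ) + 1 + (j + 1) + k - 2 = i + j + k by lia, add_comm 1]
  · have hle : ¬ (i : ℕ) + 1 ≤ j + 1 := fun h => hij (Nat.le_of_succ_le_succ h)
    simp [hij]

/-- The orbit-counting generating function for symmetric plane partitions in `B(n,n,m)`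
is `∏_{η ∈ B(n,n,m)/S₂} (1-q^{1+Ht(η)})/(1-q^{Ht(η)})`, where the orbits `η` are
represented by their elements `(i,j,k)` with `i ≤ j` and `Ht(η) = i+j+k-2`. -/
theorem orbit_counting_symmetric_pp (m n : ℕ) (hm : 0 < m) (hn : 0 < n) :
    ∑ P ∈ (ppBox n n m).powerset.filter
        (fun P => IsPlanePartition P ∧ IsSymmetricPP P),
      (PowerSeries.X : PowerSeries ℚ) ^ orbitCount P =
    ∏ p ∈ (ppBox n n m).filter (fun p => p.1 ≤ p.2.1),
      (1 - (PowerSeries.X : PowerSeries ℚ) ^ (1 + (p.1 + p.2.1 + p.2.2 - 2))) *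
        (1 - (PowerSeries.X : PowerSeries ℚ) ^ (p.1 + p.2.1 + p.2.2 - 2))⁻¹ := by
  let φ : PowerSeries ℚ →+* FractionRing (PowerSeries ℚ) := algebraMap _ _
  have hφ : Function.Injective φ := IsFractionRing.injective _ _
  have hq0 : φ PowerSeries.X ≠ 0 := (map_ne_zero_iff φ hφ).mpr PowerSeries.X_ne_zero
  have hq : ∀ k : ℕ, 1 - φ PowerSeries.X ^ (k + 1) ≠ 0 := by
    intro k
    rw [← map_pow, ← map_one φ, ← map_sub]
    exact (map_ne_zero_iff φ hφ).mpr (one_sub_X_pow_succ_ne_zero k)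
  let G : ℕ → PowerSeries ℚ := fun m => ∑ P ∈ (ppBox n n m).powerset.filter
    (fun P => IsPlanePartition P ∧ IsSymmetricPP P), PowerSeries.X ^ orbitCount P
  let T : ℕ → PowerSeries ℚ := fun m => ∏ i : Fin n, ∏ j ∈ Finset.Ici i,
    (1 - (PowerSeries.X : PowerSeries ℚ) ^ (m + (i : ℕ) + j + 1))
  obtain ⟨a, b, ha, h⟩ := sum_interlaceSum_eq_prod (φ PowerSeries.X) hq0 hq n
  set a' := a * φ PowerSeries.X ^ (∑ i : Fin n, ∑ j : Fin n, if i ≤ j then (j.rev : ℕ) else 0)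
    with ha'
  have ha'0 : a' ≠ 0 := mul_ne_zero ha (pow_ne_zero _ hq0)
  have hGT : ∀ m, a' * φ (G m) = b * φ (T m) := by
    intro m
    have hm := h m
    rw [← sum_strictPatterns, sum_strictPatterns_eq_sum_symmetricPP, ← mul_assoc, ← ha'] at hm
    simpa only [G, T, map_sum, map_prod, map_sub, map_one, map_pow] using hm
  have hG0 : G 0 = 1 := by
    have hbox : ppBox n n 0 = ∅ := by simp [ppBox]
    have hempty : (ppBox n n 0).powerset.filter
        (fun P => IsPlanePartition P ∧ IsSymmetricPP P) = {∅} := by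
      rw [hbox, Finset.powerset_empty, Finset.filter_singleton, if_pos]
      simp [IsPlanePartition, IsSymmetricPP]
    simp only [G, hempty, Finset.sum_singleton]
    simp [orbitCount]
  have h0 : a' = b * φ (T 0) := by
    rw [← hGT 0, hG0, map_one, mul_one]
  have hb0 : b ≠ 0 := left_ne_zero_of_mul (h0 ▸ ha'0)
  have hT0 : T 0 ≠ 0 := fun hT => ha'0 (by rw [h0, hT, map_zero, mul_zero])
  have hG : T 0 * G m = T m := by
    refine hφ (mul_left_cancel₀ hb0 ?_)
    rw [← hGT m, h0, map_mul]
    ring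
  refine mul_left_cancel₀ hT0 (hG.trans ?_)
  rw [mul_comm]
  exact (prod_orbits_mul_prod n m).symm
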